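/- arXiv:2506.23651 — 2 statements merged into one kernel-verified Lean document; each statement's English description precedes it below -/
import Mathlib

section
/- Let A, B, C be categories and let G₁ : A ⥤ B and G₂ : B ⥤ C be functors such that G₂ is monadic, the composite G₁ ⋙ G₂ : A ⥤ C is monadic, and G₁ has a left adjoint. Then G₁ is monadic. -/
open CategoryTheory

open Limits

/-!
A `G₁`-split pair is also `(G₁ ⋙ G₂)`-split, so `G₁ ⋙ G₂` creates its coequalizer. The image of
the pair under `G₁` has a split coequalizer, which `G₂` preserves and, being conservative, also
reflects; hence `G₁` preserves the created coequalizer. As `G₁` is conservative because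
`G₁ ⋙ G₂` is, Beck's monadicity theorem applies.
-/

section SplitPairs

variable {X Y Z : Type*} [Category X] [Category Y] [Category Z]
  (R : X ⥤ Y) (S : Y ⥤ Z) {x y : X} (f g : x ⟶ y) [R.IsSplitPair f g]

theorem isSplitPair_comp : (R ⋙ S).IsSplitPair f g :=
  inferInstanceAs (HasSplitCoequalizer (S.map (R.map f)) (S.map (R.map g)))

theorem hasColimit_parallelPair_comp_of_isSplitPair : HasColimit (parallelPair f g ⋙ R) :=
  let e : parallelPair f g ⋙ R ≅ parallelPair (R.map f) (R.map g) := diagramIsoParallelPair _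
  hasColimit_of_iso e

theorem preservesColimit_parallelPair_comp_of_isSplitPair :
    PreservesColimit (parallelPair f g ⋙ R) S :=
  let e : parallelPair f g ⋙ R ≅ parallelPair (R.map f) (R.map g) := diagramIsoParallelPair _
  preservesColimit_of_iso_diagram S e.symm

end SplitPairs

section Monadic

variable {X Y : Type*} [Category X] [Category Y] (R : X ⥤ Y) [MonadicRightAdjoint R]

theorem reflectsIsomorphisms_of_monadic : R.ReflectsIsomorphisms :=
  reflectsIsomorphisms_of_iso (Monad.comparisonForget (monadicAdjunction R))

/-- The creation half of Beck's theorem. -/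
noncomputable abbrev createsCoequalizerOfIsSplitPair {x y : X} (f g : x ⟶ y)
    [R.IsSplitPair f g] : CreatesColimit (parallelPair f g) R :=
  let T := monadicLeftAdjoint R ⋙ R
  have : (R ⋙ T).IsSplitPair f g := isSplitPair_comp R T f g
  have : PreservesColimit (parallelPair f g ⋙ R) T :=
    preservesColimit_parallelPair_comp_of_isSplitPair R T f g
  have : PreservesColimit ((parallelPair f g ⋙ R) ⋙ T) T :=
    preservesColimit_parallelPair_comp_of_isSplitPair (R ⋙ T) T f g
  monadicCreatesColimitOfPreservesColimit R (parallelPair f g)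

end Monadic

section Comparison

variable {X Y : Type*} [Category X] [Category Y] {L : Y ⥤ X} {R : X ⥤ Y} (adj : L ⊣ R)

/-- The pair `L R L M ⇉ L M` attached to an algebra `M`, as a diagram. Its coequalizer is the value
at `M` of the left adjoint of the comparison functor. -/
abbrev beckPair (M : adj.toMonad.Algebra) : WalkingParallelPair ⥤ X :=
  parallelPair (L.map M.a) (adj.counit.app (L.obj M.A))

theorem isSplitPair_beckPair (M : adj.toMonad.Algebra) :
    R.IsSplitPair (L.map M.a) (adj.counit.app (L.obj M.A)) :=
  ⟨_, _, ⟨Monad.beckSplitCoequalizer M⟩⟩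

theorem nonempty_isColimit_counit (x : X)
    [h : ReflectsColimit (beckPair adj ((Monad.comparison adj).obj x)) R] :
    Nonempty (IsColimit (Cofork.ofπ (adj.counit.app x) (adj.counit_naturality _))) :=
  have : ReflectsColimit
      (parallelPair (L.map (R.map (adj.counit.app x))) (adj.counit.app ((R ⋙ L).obj x))) R := h
  ⟨isColimitOfIsColimitCoforkMap R _ (Monad.beckCoequalizer ((Monad.comparison adj).obj x))⟩

theorem comparison_faithful
    [∀ x, ReflectsColimit (beckPair adj ((Monad.comparison adj).obj x)) R] :
    (Monad.comparison adj).Faithful :=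
  have (x : X) : Epi (adj.counit.app x) :=
    (nonempty_isColimit_counit adj x).elim Cofork.IsColimit.epi
  have : R.Faithful := adj.faithful_R_of_epi_counit_app
  inferInstance

theorem counit_coequalizes_transpose {x y : X} (h : R.obj x ⟶ R.obj y)
    (h_alg : R.map (L.map h) ≫ R.map (adj.counit.app y) = R.map (adj.counit.app x) ≫ h) :
    L.map (R.map (adj.counit.app x)) ≫ L.map h ≫ adj.counit.app y =
      adj.counit.app (L.obj (R.obj x)) ≫ L.map h ≫ adj.counit.app y :=
  calc
    _ = L.map (R.map (L.map h ≫ adj.counit.app y)) ≫ adj.counit.app y := by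
      rw [R.map_comp, h_alg, L.map_comp, Category.assoc]
    _ = _ := adj.counit_naturality _

theorem exists_map_eq_of_comp_counit {x y : X}
    [ReflectsColimit (beckPair adj ((Monad.comparison adj).obj x)) R] (h : R.obj x ⟶ R.obj y)
    (h_alg : R.map (L.map h) ≫ R.map (adj.counit.app y) = R.map (adj.counit.app x) ≫ h) :
    ∃ f : x ⟶ y, R.map f = h := by
  obtain ⟨hx⟩ := nonempty_isColimit_counit adj x
  obtain ⟨f, hf⟩ : { f : x ⟶ y // adj.counit.app x ≫ f = L.map h ≫ adj.counit.app y } :=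
    Cofork.IsColimit.desc' hx _ (counit_coequalizes_transpose adj h h_alg)
  refine ⟨f, ?_⟩
  calc
    R.map f = adj.unit.app (R.obj x) ≫ R.map (adj.counit.app x ≫ f) := by simp
    _ = adj.unit.app (R.obj x) ≫ R.map (L.map h ≫ adj.counit.app y) := by rw [hf]
    _ = h := by simp

theorem comparison_full
    [∀ x, ReflectsColimit (beckPair adj ((Monad.comparison adj).obj x)) R] :
    (Monad.comparison adj).Full where
  map_surjective h :=
    let ⟨f, hf⟩ := exists_map_eq_of_comp_counit adj h.f h.h
    ⟨f, Monad.Algebra.Hom.ext hf⟩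

theorem nonempty_iso_comparison_obj (M : adj.toMonad.Algebra) {x : X} (π : L.obj M.A ⟶ x)
    (i : M.A ≅ R.obj x) (a_comp_i : M.a ≫ i.hom = R.map π) :
    Nonempty ((Monad.comparison adj).obj x ≅ M) := by
  have i_eq : i.hom = adj.homEquiv _ _ π := by
    rw [adj.homEquiv_unit, ← a_comp_i]
    exact (M.unit_assoc _).symm
  have map_i_comp_counit : L.map i.hom ≫ adj.counit.app x = π :=
    (adj.homEquiv_counit _ _ _).symm.trans ((Equiv.symm_apply_eq _).mpr i_eq)
  have i_alg : R.map (L.map i.hom) ≫ R.map (adj.counit.app x) = M.a ≫ i.hom := by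
    rw [← R.map_comp, map_i_comp_counit, a_comp_i]
  exact ⟨(Monad.Algebra.isoMk i i_alg).symm⟩

theorem comparison_essSurj [∀ M, HasColimit (beckPair adj M)]
    [∀ M, PreservesColimit (beckPair adj M) R] : (Monad.comparison adj).EssSurj where
  mem_essImage M := by
    let π : Cofork (L.map M.a) (adj.counit.app (L.obj M.A)) := colimit.cocone (beckPair adj M)
    have map_π : IsColimit (Cofork.ofπ (R.map π.π) _) :=
      isColimitCoforkMapOfIsColimit R π.condition
        ((colimit.isColimit (beckPair adj M)).ofIsoColimit (Cofork.isoCoforkOfπ π))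
    exact ⟨π.pt, nonempty_iso_comparison_obj adj M π.π
      ((Monad.beckCoequalizer M).coconePointUniqueUpToIso map_π)
      ((Monad.beckCoequalizer M).comp_coconePointUniqueUpToIso_hom map_π .one)⟩

/-- Beck's theorem. The versions in `CategoryTheory.Monad` require the morphisms of the two
categories to live in the same universe. -/
theorem comparison_isEquivalence [∀ M, HasColimit (beckPair adj M)]
    [∀ M, PreservesColimit (beckPair adj M) R] [R.ReflectsIsomorphisms] :
    (Monad.comparison adj).IsEquivalence :=
  have (M : adj.toMonad.Algebra) : ReflectsColimit (beckPair adj M) R :=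
    reflectsColimit_of_reflectsIsomorphisms _ R
  { faithful := comparison_faithful adj
    full := comparison_full adj
    essSurj := comparison_essSurj adj }

end Comparison

section Cancellation

variable {A B C : Type*} [Category A] [Category B] [Category C] (G₁ : A ⥤ B) (G₂ : B ⥤ C)

theorem hasCoequalizer_of_isSplitPair [MonadicRightAdjoint G₁] {x y : A} (f g : x ⟶ y)
    [G₁.IsSplitPair f g] : HasCoequalizer f g :=
  have := createsCoequalizerOfIsSplitPair G₁ f g
  have := hasColimit_parallelPair_comp_of_isSplitPair G₁ f g
  hasColimit_of_created (parallelPair f g) G₁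

theorem preservesCoequalizer_of_isSplitPair_of_comp [G₂.ReflectsIsomorphisms]
    [MonadicRightAdjoint (G₁ ⋙ G₂)] {x y : A} (f g : x ⟶ y) [G₁.IsSplitPair f g] :
    PreservesColimit (parallelPair f g) G₁ :=
  have := isSplitPair_comp G₁ G₂ f g
  have := createsCoequalizerOfIsSplitPair (G₁ ⋙ G₂) f g
  have := hasColimit_parallelPair_comp_of_isSplitPair (G₁ ⋙ G₂) f g
  have := hasColimit_parallelPair_comp_of_isSplitPair G₁ f g
  have := preservesColimit_parallelPair_comp_of_isSplitPair G₁ G₂ f g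
  have : ReflectsColimit (parallelPair f g ⋙ G₁) G₂ := reflectsColimit_of_reflectsIsomorphisms _ G₂
  preservesColimit_of_reflects_of_preserves G₁ G₂

theorem monadic_of_monadic_comp_general [G₂.ReflectsIsomorphisms] [MonadicRightAdjoint (G₁ ⋙ G₂)]
    [G₁.IsRightAdjoint] : Nonempty (MonadicRightAdjoint G₁) := by
  let adj := Adjunction.ofIsRightAdjoint G₁
  have := isSplitPair_beckPair adj
  have (M : adj.toMonad.Algebra) : HasColimit (beckPair adj M) :=
    have := isSplitPair_comp G₁ G₂ (G₁.leftAdjoint.map M.a) (adj.counit.app _)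
    hasCoequalizer_of_isSplitPair (G₁ ⋙ G₂) _ _
  have (M : adj.toMonad.Algebra) : PreservesColimit (beckPair adj M) G₁ :=
    preservesCoequalizer_of_isSplitPair_of_comp G₁ G₂ _ _
  have := reflectsIsomorphisms_of_monadic (G₁ ⋙ G₂)
  have : G₁.ReflectsIsomorphisms := reflectsIsomorphisms_of_comp G₁ G₂
  exact ⟨⟨_, adj, comparison_isEquivalence adj⟩⟩

end Cancellation

/-- **Cancellation lemma for monadic functors** (Bourn).
If `G₂ : B ⥤ C` is monadic, the composite `G₁ ⋙ G₂ : A ⥤ C` is monadic,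
and `G₁ : A ⥤ B` has a left adjoint, then `G₁` is monadic. -/
theorem monadic_of_monadic_comp {A : Type*} [Category A] {B : Type*} [Category B]
    {C : Type*} [Category C] (G₁ : A ⥤ B) (G₂ : B ⥤ C)
    [MonadicRightAdjoint G₂] [MonadicRightAdjoint (G₁ ⋙ G₂)] [G₁.IsRightAdjoint] :
    Nonempty (MonadicRightAdjoint G₁) :=
  have := reflectsIsomorphisms_of_monadic G₂
  monadic_of_monadic_comp_general G₁ G₂
end

section
/- Let C and D be small categories and let G : (C ⥤ Type) ⥤ (D ⥤ Type) be a functor between the corresponding functor categories. Then the comma category Comma (𝟭 (D ⥤ Type)) G — whose objects are triples of an object d of D ⥤ Type, an object x of C ⥤ Type, and a morphism d ⟶ G.obj x — is a presheaf category (i.e., equivalent to a functor category E ⥤ Type for some small category E) if and only if G is a parametric right adjoint. -/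
open CategoryTheory CategoryTheory.Limits

/-- The canonical comparison functor `A ⥤ Over (G.obj ⊤_A)` of a functor `G : A ⥤ B`,
sending `X` to `G.map (terminal.from X)`. -/
noncomputable def CategoryTheory.Functor.praComparison {A : Type*} [Category A] {B : Type*}
    [Category B] [HasTerminal A] (G : A ⥤ B) : A ⥤ Over (G.obj (⊤_ A)) where
  obj X := Over.mk (G.map (terminal.from X))
  map {X Y} f := Over.homMk (G.map f) (by simp [← Functor.map_comp])

/-- A functor `G : A ⥤ B` (with `A` having a terminal object) is a *parametric right adjoint*
if the induced functor `A ⥤ Over (G.obj ⊤_A)` has a left adjoint. -/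
def CategoryTheory.Functor.IsParametricRightAdjoint {A : Type*} [Category A] {B : Type*}
    [Category B] [HasTerminal A] (G : A ⥤ B) : Prop :=
  G.praComparison.IsRightAdjoint

/-!
Let `K` be the gluing `Comma (𝟭 B) G`. Sending `b ⟶ G a` to its composite with `G a ⟶ G ⊤` defines
a functor `K ⥤ Over (G ⊤)`, left adjoint to the fully faithful functor sending `b ⟶ G ⊤` to
`(b, ⊤, b ⟶ G ⊤)`. It is a right adjoint if and only if `G` is a parametric right adjoint: compose
with `a ↦ (G a, a, 𝟙)` in one direction, and in the other turn the unit `Y ⟶ G (L Y)` into an object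
of `K`.

The image of `Over (G ⊤)` in `K` is the closed complement of the subterminal object
`U = (⊥, ⊤, !)`. In a category of presheaves, the closed complement of `U` consists of the right
Kan extensions from the objects at which `U` is empty, and restriction to these objects also has a
left adjoint, namely left Kan extension.

Conversely, if `K ⥤ Over (G ⊤)` is a right adjoint, then the evaluations of the presheaf categories
`Over (G ⊤)` and `A`, pulled back to `K`, form a small, jointly conservative family of cocontinuous
corepresentable functors, so `K` is the category of presheaves on the corepresenting objects.
-/

open Opposite

universe w v v₁ v₂ u u₁ u₂

/-- A presheaf category (relative to the universe `w`): a category equivalent to `E ⥤ Type w` for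
a small category `E`. Covariant functors are used, so `E` is the opposite of the usual site. -/
def IsPresheafCategory (K : Type u) [Category.{v} K] : Prop :=
  ∃ (E : Type w) (_ : SmallCategory E), Nonempty (K ≌ E ⥤ Type w)

namespace IsPresheafCategory

lemma functorCategory (E : Type w) [SmallCategory E] : IsPresheafCategory.{w} (E ⥤ Type w) :=
  ⟨E, inferInstance, ⟨.refl⟩⟩

variable {K : Type u} [Category.{v} K]

lemma of_equivalence {K' : Type u₁} [Category.{v₁} K'] (hK : IsPresheafCategory.{w} K)
    (Φ : K' ≌ K) : IsPresheafCategory.{w} K' := by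
  obtain ⟨E, _, ⟨Ψ⟩⟩ := hK
  exact ⟨E, inferInstance, ⟨Φ.trans Ψ⟩⟩

lemma overCategory (hK : IsPresheafCategory.{w} K) (X : K) :
    IsPresheafCategory.{w} (Over X) := by
  obtain ⟨E, _, ⟨Φ⟩⟩ := hK
  let Ψ : K ≌ Eᵒᵖᵒᵖ ⥤ Type w := Φ.trans (opOpEquivalence E).symm.congrLeft
  exact (functorCategory _).of_equivalence
    ((Over.postEquiv X Ψ).trans (overEquivPresheafCostructuredArrow _))

lemma hasColimitsOfSize (hK : IsPresheafCategory.{w} K) : HasColimitsOfSize.{w, w} K := by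
  obtain ⟨E, _, ⟨Φ⟩⟩ := hK
  exact Adjunction.has_colimits_of_equivalence Φ.functor

lemma hasStrictInitialObjects (hK : IsPresheafCategory.{w} K) : HasStrictInitialObjects K := by
  obtain ⟨E, _, ⟨Φ⟩⟩ := hK
  refine ⟨fun f hI ↦ ?_⟩
  have : IsIso (Φ.functor.map f) := (hI.isInitialObj Φ.functor).isIso_to _
  exact isIso_of_reflects_iso f Φ.functor

end IsPresheafCategory

section Recognition

lemma isIso_of_isIso_app_uliftYoneda {C : Type w} [SmallCategory C] {K : Type u} [Category.{v} K]
    {F G : (Cᵒᵖ ⥤ Type w) ⥤ K} [PreservesColimitsOfSize.{w, w} F]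
    [PreservesColimitsOfSize.{w, w} G] (η : F ⟶ G)
    [∀ X, IsIso (η.app (uliftYoneda.{w}.obj X))] : IsIso η := by
  have (P : Cᵒᵖ ⥤ Type w) : IsIso (η.app P) := by
    let D := Presheaf.functorToRepresentables.{w} P
    have : ∀ j, IsIso ((Functor.whiskerLeft D η).app j) := fun _ ↦
      inferInstanceAs (IsIso (η.app (uliftYoneda.obj _)))
    have : IsIso (Functor.whiskerLeft D η) := NatIso.isIso_of_isIso_app _
    exact isIso_app_coconePt_of_preservesColimit D η _ (Presheaf.colimitOfRepresentable.{w} P)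
  exact NatIso.isIso_of_isIso_app η

lemma isEquivalence_of_isIso_unit {P : Type u₁} [Category.{v₁} P] {K : Type u₂} [Category.{v₂} K]
    {L : P ⥤ K} {R : K ⥤ P} (adj : L ⊣ R) [IsIso adj.unit] [R.ReflectsIsomorphisms] :
    R.IsEquivalence := by
  have (X : K) : IsIso (adj.counit.app X) := by
    have : IsIso (R.map (adj.counit.app X)) :=
      .of_isIso_fac_left (adj.right_triangle_components X)
    exact isIso_of_reflects_iso _ R
  have : IsIso adj.counit := NatIso.isIso_of_isIso_app _
  exact adj.toEquivalence.isEquivalence_inverse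

variable {K : Type u} [Category.{w} K]

section Nerve

variable {C : Type w} [SmallCategory C] (A : C ⥤ K)

def restrictedULiftYonedaCompEvaluationIso (c : C) :
    Presheaf.restrictedULiftYoneda.{w} A ⋙ (evaluation _ _).obj (op c) ≅
      coyoneda.obj (op (A.obj c)) ⋙ uliftFunctor.{w} :=
  Iso.refl _

variable {A}

lemma preservesColimitsOfSize_restrictedULiftYoneda
    (hA : ∀ c, PreservesColimitsOfSize.{w, w} (coyoneda.obj (op (A.obj c)))) :
    PreservesColimitsOfSize.{w, w} (Presheaf.restrictedULiftYoneda.{w} A) := by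
  have (c : Cᵒᵖ) : PreservesColimitsOfSize.{w, w}
      (Presheaf.restrictedULiftYoneda.{w} A ⋙ (evaluation _ _).obj c) :=
    have := hA c.unop
    preservesColimits_of_natIso (restrictedULiftYonedaCompEvaluationIso A c.unop).symm
  exact ⟨fun {J} _ ↦ preservesColimitsOfShape_of_evaluation _ _ inferInstance⟩

lemma reflectsIsomorphisms_restrictedULiftYoneda
    (hA : JointlyReflectIsomorphisms fun c ↦ coyoneda.obj (op (A.obj c))) :
    (Presheaf.restrictedULiftYoneda.{w} A).ReflectsIsomorphisms where
  reflects f _ := by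
    have (c : C) : IsIso ((coyoneda.obj (op (A.obj c))).map f) := by
      have : IsIso (uliftFunctor.{w}.map ((coyoneda.obj (op (A.obj c))).map f)) :=
        (NatIso.isIso_map_iff (restrictedULiftYonedaCompEvaluationIso A c) f).1
          (inferInstanceAs (IsIso (((Presheaf.restrictedULiftYoneda.{w} A).map f).app (op c))))
      exact isIso_of_reflects_iso _ uliftFunctor.{w}
    exact hA.isIso f

variable (A)

section Realization

variable (L : (Cᵒᵖ ⥤ Type w) ⥤ K) (α : A ⟶ uliftYoneda.{w} ⋙ L) [L.IsLeftKanExtension α]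
  [Functor.HasPointwiseLeftKanExtension uliftYoneda.{w} A]

lemma uliftYonedaAdjunction_unit_app_uliftYoneda_obj {X Y : C} (f : Y ⟶ X) :
    ((Presheaf.uliftYonedaAdjunction.{w} L α).unit.app (uliftYoneda.obj X)).app (op Y) ⟨f⟩ =
      ULift.up (A.map f ≫ α.app X) := by
  refine (Presheaf.uliftYonedaAdjunction_unit_app_app.{w} L α _ _).trans ?_
  rw [α.naturality f]
  rfl

lemma isIso_uliftYonedaAdjunction_unit_app_uliftYoneda_obj [A.Full] [A.Faithful] [IsIso α] (X : C) :
    IsIso ((Presheaf.uliftYonedaAdjunction.{w} L α).unit.app (uliftYoneda.obj X)) := by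
  let adj := Presheaf.uliftYonedaAdjunction.{w} L α
  have (Y : Cᵒᵖ) : IsIso ((adj.unit.app (uliftYoneda.obj X)).app Y) := by
    let e : ULift.{w} (Y.unop ⟶ X) ≃ ULift.{w} (A.obj Y.unop ⟶ L.obj (uliftYoneda.obj X)) :=
      Equiv.ulift.trans <| (Functor.FullyFaithful.ofFullyFaithful A).homEquiv.trans <|
        (asIso (α.app X)).homToEquiv.trans Equiv.ulift.symm
    have he : ⇑((adj.unit.app (uliftYoneda.obj X)).app Y) = e :=
      funext fun ⟨f⟩ ↦ uliftYonedaAdjunction_unit_app_uliftYoneda_obj A L α f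
    rw [isIso_iff_bijective, he]
    exact e.bijective
  exact NatIso.isIso_of_isIso_app _

end Realization

variable {A}

theorem isEquivalence_restrictedULiftYoneda [HasColimitsOfSize.{w, w} K] [A.Full] [A.Faithful]
    (hcolim : ∀ c, PreservesColimitsOfSize.{w, w} (coyoneda.obj (op (A.obj c))))
    (hiso : JointlyReflectIsomorphisms fun c ↦ coyoneda.obj (op (A.obj c))) :
    (Presheaf.restrictedULiftYoneda.{w} A).IsEquivalence := by
  let L := uliftYoneda.{w}.leftKanExtension A
  let α : A ⟶ uliftYoneda.{w} ⋙ L := uliftYoneda.{w}.leftKanExtensionUnit A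
  let adj : L ⊣ Presheaf.restrictedULiftYoneda.{w} A := Presheaf.uliftYonedaAdjunction.{w} L α
  have := preservesColimitsOfSize_restrictedULiftYoneda hcolim
  have := reflectsIsomorphisms_restrictedULiftYoneda hiso
  have := adj.leftAdjoint_preservesColimits
  have : IsIso α := by dsimp only [α]; infer_instance
  have (X : C) : IsIso (adj.unit.app (uliftYoneda.{w}.obj X)) :=
    isIso_uliftYonedaAdjunction_unit_app_uliftYoneda_obj A L α X
  have : IsIso adj.unit := isIso_of_isIso_app_uliftYoneda adj.unit
  exact isEquivalence_of_isIso_unit adj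

end Nerve

theorem IsPresheafCategory.of_isCorepresentable [HasColimitsOfSize.{w, w} K] {ι : Type w}
    (F : ι → K ⥤ Type w) [∀ i, (F i).IsCorepresentable]
    [∀ i, PreservesColimitsOfSize.{w, w} (F i)] (hF : JointlyReflectIsomorphisms F) :
    IsPresheafCategory.{w} K := by
  let A := inducedFunctor fun i ↦ (F i).coreprX
  have hcolim (i) : PreservesColimitsOfSize.{w, w} (coyoneda.obj (op (A.obj i))) :=
    preservesColimits_of_natIso (F i).coreprW.symm
  have hiso : JointlyReflectIsomorphisms fun i ↦ coyoneda.obj (op (A.obj i)) := ⟨fun f h ↦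
    have (i : ι) : IsIso ((F i).map f) := (NatIso.isIso_map_iff (F i).coreprW f).1 (h i)
    hF.isIso f⟩
  have := isEquivalence_restrictedULiftYoneda hcolim hiso
  exact (functorCategory _).of_equivalence (Presheaf.restrictedULiftYoneda.{w} A).asEquivalence

lemma isCorepresentable_comp_evaluation {E : Type w} [SmallCategory E] (R : K ⥤ E ⥤ Type w)
    [R.IsRightAdjoint] (e : E) : (R ⋙ (evaluation _ _).obj e).IsCorepresentable :=
  (((Adjunction.ofIsRightAdjoint R).corepresentableBy (coyoneda.obj (op e))).ofIso
    (Functor.isoWhiskerLeft R (curriedCoyonedaLemma.app e))).isCorepresentable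

theorem IsPresheafCategory.of_conservative_pair [HasColimitsOfSize.{w, w} K]
    {P : Type u₁} [Category.{w} P] (hP : IsPresheafCategory.{w} P)
    {Q : Type u₂} [Category.{w} Q] (hQ : IsPresheafCategory.{w} Q)
    (R : K ⥤ P) [R.IsRightAdjoint] [PreservesColimitsOfSize.{w, w} R]
    (S : K ⥤ Q) [S.IsRightAdjoint] [PreservesColimitsOfSize.{w, w} S]
    (hRS : ∀ ⦃X Y : K⦄ (f : X ⟶ Y), IsIso (R.map f) → IsIso (S.map f) → IsIso f) :
    IsPresheafCategory.{w} K := by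
  obtain ⟨E₁, _, ⟨Φ⟩⟩ := hP
  obtain ⟨E₂, _, ⟨Ψ⟩⟩ := hQ
  let F : E₁ ⊕ E₂ → K ⥤ Type w := Sum.elim
    (fun e ↦ (R ⋙ Φ.functor) ⋙ (evaluation _ _).obj e)
    (fun e ↦ (S ⋙ Ψ.functor) ⋙ (evaluation _ _).obj e)
  have hcolim (i) : PreservesColimitsOfSize.{w, w} (F i) := by
    cases i <;> dsimp only [F, Sum.elim] <;> infer_instance
  have hcorep (i) : (F i).IsCorepresentable := by
    cases i <;> exact isCorepresentable_comp_evaluation _ _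
  refine IsPresheafCategory.of_isCorepresentable F ⟨fun f hf ↦ ?_⟩
  have hR : IsIso (Φ.functor.map (R.map f)) := by
    have (e : E₁) : IsIso ((Φ.functor.map (R.map f)).app e) := hf (.inl e)
    exact NatIso.isIso_of_isIso_app _
  have hS : IsIso (Ψ.functor.map (S.map f)) := by
    have (e : E₂) : IsIso ((Ψ.functor.map (S.map f)).app e) := hf (.inr e)
    exact NatIso.isIso_of_isIso_app _
  exact hRS f (isIso_of_reflects_iso _ Φ.functor) (isIso_of_reflects_iso _ Ψ.functor)

end Recognition

section ClosedComplement

variable {K : Type u} [Category.{v} K]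

/-- The closed complement of a subterminal object `U`: the objects `X` which are terminal as seen
from `U`, that is, such that `X × U ⟶ U` is an isomorphism when this product exists. -/
def closedComplement (U : K) : ObjectProperty K :=
  fun X ↦ ∀ ⦃Z : K⦄, (Z ⟶ U) → Nonempty (Unique (Z ⟶ X))

variable {U : K}

instance : (closedComplement U).IsClosedUnderIsomorphisms where
  of_iso e hX Z f :=
    have ⟨_⟩ := hX f
    ⟨(e.homToEquiv (Z := Z)).symm.unique⟩

lemma essImage_le_closedComplement {K' : Type u₁} [Category.{v₁} K'] {q : K ⥤ K'} {R : K' ⥤ K}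
    (adj : q ⊣ R) (hU : ∀ ⦃Z : K⦄, (Z ⟶ U) → Nonempty (IsInitial (q.obj Z))) :
    R.essImage ≤ closedComplement U := by
  rintro X ⟨Y, ⟨e⟩⟩
  refine (closedComplement U).prop_of_iso e fun Z f ↦ ?_
  obtain ⟨hZ⟩ := hU f
  have : Unique (q.obj Z ⟶ Y) := { default := hZ.to Y, uniq := fun _ ↦ hZ.hom_ext _ _ }
  exact ⟨(adj.homEquiv Z Y).symm.unique⟩

lemma nonempty_unique_obj_of_isCorepresentable {X : K} (hX : closedComplement U X)
    (T : K ⥤ Type w) [T.IsCorepresentable] (u : T.obj U) : Nonempty (Unique (T.obj X)) := by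
  obtain ⟨_⟩ := hX (T.corepresentableBy.homEquiv.symm u)
  exact ⟨T.corepresentableBy.homEquiv.symm.unique⟩

end ClosedComplement

section EmptyLocus

variable {E : Type w} [SmallCategory E]

/-- The objects at which a presheaf has no elements. -/
abbrev emptyLocus (F : E ⥤ Type w) : ObjectProperty E :=
  fun e ↦ IsEmpty (F.obj e)

lemma nonempty_isInitial_of_isEmpty_obj {C : Type u} [Category.{v} C] (F : C ⥤ Type w)
    (hF : ∀ c, IsEmpty (F.obj c)) : Nonempty (IsInitial F) :=
  ⟨Functor.isInitial fun c ↦ ((Types.initial_iff_empty _).2 (hF c)).some⟩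

variable {K : Type u} [Category.{w} K] (Φ : K ≌ E ⥤ Type w) (U : K)

/-- Restriction to the empty locus of `U`, in a category `K` equivalent to `E ⥤ Type w`. -/
abbrev restrictEmptyLocus : K ⥤ (emptyLocus (Φ.functor.obj U)).FullSubcategory ⥤ Type w :=
  Φ.functor ⋙ (Functor.whiskeringLeft _ _ _).obj (emptyLocus (Φ.functor.obj U)).ι

/-- Right Kan extension from the empty locus of `U`. -/
noncomputable abbrev extendEmptyLocus :
    ((emptyLocus (Φ.functor.obj U)).FullSubcategory ⥤ Type w) ⥤ K :=
  (emptyLocus (Φ.functor.obj U)).ι.ran ⋙ Φ.inverse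

noncomputable def restrictEmptyLocusAdjunction : restrictEmptyLocus Φ U ⊣ extendEmptyLocus Φ U :=
  Φ.toAdjunction.comp ((emptyLocus (Φ.functor.obj U)).ι.ranAdjunction (Type w))

instance isRightAdjoint_restrictEmptyLocus : (restrictEmptyLocus Φ U).IsRightAdjoint :=
  have := ((emptyLocus (Φ.functor.obj U)).ι.lanAdjunction (Type w)).isRightAdjoint
  inferInstance

noncomputable def fullyFaithfulExtendEmptyLocus : (extendEmptyLocus Φ U).FullyFaithful :=
  have : IsIso ((emptyLocus (Φ.functor.obj U)).ι.ranAdjunction (Type w)).counit :=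
    Functor.reflective' _
  ((emptyLocus (Φ.functor.obj U)).ι.ranAdjunction (Type w)).fullyFaithfulROfIsIsoCounit.comp
    Φ.fullyFaithfulInverse

lemma essImage_extendEmptyLocus_le :
    (extendEmptyLocus Φ U).essImage ≤ closedComplement U := by
  refine essImage_le_closedComplement (restrictEmptyLocusAdjunction Φ U) fun Z f ↦ ?_
  refine nonempty_isInitial_of_isEmpty_obj _ fun e ↦ ?_
  have := e.property
  exact Function.isEmpty ((Φ.functor.map f).app e.obj)

variable {U} in
lemma isIso_unit_app_of_closedComplement {X : K} (hX : closedComplement U X) :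
    IsIso ((restrictEmptyLocusAdjunction Φ U).unit.app X) := by
  have := (fullyFaithfulExtendEmptyLocus Φ U).full
  have := (fullyFaithfulExtendEmptyLocus Φ U).faithful
  let adj := restrictEmptyLocusAdjunction Φ U
  have hRX := essImage_extendEmptyLocus_le Φ U _
    ((extendEmptyLocus Φ U).obj_mem_essImage ((restrictEmptyLocus Φ U).obj X))
  have (e : E) : IsIso ((Φ.functor.map (adj.unit.app X)).app e) := by
    by_cases he : IsEmpty ((Φ.functor.obj U).obj e)
    · exact inferInstanceAs
        (IsIso (((restrictEmptyLocus Φ U).map (adj.unit.app X)).app ⟨e, he⟩))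
    · obtain ⟨u⟩ := not_isEmpty_iff.1 he
      have := isCorepresentable_comp_evaluation Φ.functor e
      let T := Φ.functor ⋙ (evaluation _ _).obj e
      obtain ⟨_⟩ := nonempty_unique_obj_of_isCorepresentable hX T u
      obtain ⟨_⟩ := nonempty_unique_obj_of_isCorepresentable hRX T u
      exact (isIso_iff_bijective (T.map (adj.unit.app X))).2 (Unique.bijective (A := T.obj X)
        (B := T.obj ((extendEmptyLocus Φ U).obj ((restrictEmptyLocus Φ U).obj X))))
  have : IsIso (Φ.functor.map (adj.unit.app X)) := NatIso.isIso_of_isIso_app _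
  exact isIso_of_reflects_iso _ Φ.functor

theorem essImage_extendEmptyLocus :
    (extendEmptyLocus Φ U).essImage = closedComplement U := by
  refine le_antisymm (essImage_extendEmptyLocus_le Φ U) fun X hX ↦ ?_
  have := isIso_unit_app_of_closedComplement Φ hX
  exact (restrictEmptyLocusAdjunction Φ U).mem_essImage_of_unit_isIso X

end EmptyLocus

section Reflections

variable {K : Type u} [Category.{v} K] {B₁ : Type u₁} [Category.{v₁} B₁] {B₂ : Type u₂}
  [Category.{v₂} B₂]

lemma isRightAdjoint_of_essImage_eq {r : K ⥤ B₁} {I : B₁ ⥤ K} {q : K ⥤ B₂} {R : B₂ ⥤ K}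
    (adj : r ⊣ I) (hI : I.FullyFaithful) (adj' : q ⊣ R) (hR : R.FullyFaithful)
    (h : I.essImage = R.essImage) [q.IsRightAdjoint] : r.IsRightAdjoint := by
  have := hI.full
  have := hI.faithful
  have := hR.full
  have := hR.faithful
  let e : B₁ ⥤ B₂ := Functor.essImage.liftFunctor I R fun X ↦ h ▸ I.obj_mem_essImage X
  let i : e ⋙ R ≅ I := Functor.essImage.liftFunctorCompIso I R _
  have : e.Faithful := .of_comp_iso i
  have : e.Full := .of_comp_faithful_iso i
  have : e.EssSurj := ⟨fun Y ↦ by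
    obtain ⟨X, ⟨k⟩⟩ : I.essImage (R.obj Y) := h ▸ R.obj_mem_essImage Y
    exact ⟨X, ⟨R.preimageIso (i.app X ≪≫ k)⟩⟩⟩
  have : e.IsEquivalence := { }
  let adj'' : q ⋙ e.inv ⊣ I := (adj'.comp e.asEquivalence.symm.toAdjunction).ofNatIsoRight i
  exact Functor.isRightAdjoint_of_iso (adj''.leftAdjointUniq adj)

end Reflections

theorem IsPresheafCategory.isRightAdjoint_of_essImage_eq_closedComplement {K : Type u}
    [Category.{w} K] (hK : IsPresheafCategory.{w} K) {K' : Type u₁} [Category.{v₁} K']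
    {r : K ⥤ K'} {I : K' ⥤ K} (adj : r ⊣ I) (hI : I.FullyFaithful) {U : K}
    (h : I.essImage = closedComplement U) : r.IsRightAdjoint := by
  obtain ⟨E, _, ⟨Φ⟩⟩ := hK
  exact isRightAdjoint_of_essImage_eq adj hI (restrictEmptyLocusAdjunction Φ U)
    (fullyFaithfulExtendEmptyLocus Φ U) (h.trans (essImage_extendEmptyLocus Φ U).symm)

section Gluing

variable {A : Type u₁} [Category.{v₁} A] {B : Type u₂} [Category.{v₂} B] (G : A ⥤ B)

/-- The Artin gluing of `A` and `B` along `G`: its objects are the triples `(b, a, b ⟶ G a)`. -/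
abbrev ArtinGluing := Comma (𝟭 B) G

namespace ArtinGluing

/-- The open inclusion `a ↦ (G a, a, 𝟙)` of `A` into the gluing, right adjoint to the projection. -/
def ofBase : A ⥤ ArtinGluing G where
  obj a := { left := G.obj a, right := a, hom := 𝟙 _ }
  map f := { left := G.map f, right := f }

def sndAdjunctionOfBase : Comma.snd (𝟭 B) G ⊣ ofBase G :=
  .mkOfHomEquiv
    { homEquiv X a :=
        { toFun f := { left := X.hom ≫ G.map f, right := f, w := Category.comp_id _ }
          invFun g := g.right
          right_inv g := by
            ext
            · exact g.w.symm.trans (Category.comp_id _)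
            · rfl }
      homEquiv_naturality_right f g := by
        ext
        · exact (congrArg _ (G.map_comp f g)).trans (Category.assoc _ _ _).symm
        · rfl }

section Initial

variable [HasInitial B]

/-- The object `(⊥, a, !)` of the gluing; `a ↦ (⊥, a, !)` is left adjoint to the projection. -/
noncomputable def ofInitial (a : A) : ArtinGluing G where
  left := ⊥_ B
  right := a
  hom := initial.to _

variable {G} in
noncomputable def ofInitialHomEquiv (a : A) (X : ArtinGluing G) :
    (ofInitial G a ⟶ X) ≃ (a ⟶ X.right) where
  toFun g := g.right
  invFun f := { left := initial.to _, right := f, w := initialIsInitial.hom_ext _ _ }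
  left_inv g := by
    ext
    · exact initialIsInitial.hom_ext _ _
    · rfl

instance isRightAdjoint_snd : (Comma.snd (𝟭 B) G).IsRightAdjoint :=
  (Adjunction.adjunctionOfEquivLeft (fun a X ↦ ofInitialHomEquiv a X)
    fun _ _ _ _ _ ↦ rfl).isRightAdjoint

end Initial

section Terminal

variable [HasTerminal A]

variable {G} in
lemma comp_map_terminal_from {b b' : B} {a a' : A} {g : b ⟶ b'} {f : a ⟶ a'} {φ : b ⟶ G.obj a}
    {ψ : b' ⟶ G.obj a'} (w : g ≫ ψ = φ ≫ G.map f) :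
    g ≫ ψ ≫ G.map (terminal.from a') = φ ≫ G.map (terminal.from a) := by
  rw [reassoc_of% w, ← G.map_comp, terminal.comp_from]

/-- The functor sending `b ⟶ G a` to its composite with `G a ⟶ G ⊤`. -/
noncomputable def toOver : ArtinGluing G ⥤ Over (G.obj (⊤_ A)) where
  obj X := Over.mk (X.hom ≫ G.map (terminal.from X.right))
  map f := Over.homMk f.left (comp_map_terminal_from f.w)

/-- The closed inclusion `(b ⟶ G ⊤) ↦ (b, ⊤, b ⟶ G ⊤)` into the gluing. -/
noncomputable def ofOver : Over (G.obj (⊤_ A)) ⥤ ArtinGluing G where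
  obj Y := { left := Y.left, right := ⊤_ A, hom := Y.hom }
  map f := { left := f.left, right := 𝟙 _ }

noncomputable def toOverAdjunction : toOver G ⊣ ofOver G :=
  .mkOfHomEquiv
    { homEquiv X Y :=
        { toFun f := { left := f.left, right := terminal.from _, w := Over.w f }
          invFun g := Over.homMk g.left <| g.w.trans <|
            congrArg (X.hom ≫ G.map ·) (terminal.hom_ext g.right (terminal.from _))
          right_inv g := by
            ext
            · rfl
            · exact terminal.hom_ext _ _ }
      homEquiv_naturality_right _ _ := by
        ext
        · rfl
        · exact terminal.hom_ext _ _ }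

noncomputable def fullyFaithfulOfOver : (ofOver G).FullyFaithful :=
  have (Y : Over (G.obj (⊤_ A))) : IsIso ((toOverAdjunction G).counit.app Y) :=
    have : IsIso ((Over.forget _).map ((toOverAdjunction G).counit.app Y)) :=
      inferInstanceAs (IsIso (𝟙 Y.left))
    isIso_of_reflects_iso _ (Over.forget _)
  have : IsIso (toOverAdjunction G).counit := NatIso.isIso_of_isIso_app _
  (toOverAdjunction G).fullyFaithfulROfIsIsoCounit

noncomputable def ofBaseCompToOverIso : ofBase G ⋙ toOver G ≅ G.praComparison :=
  NatIso.ofComponents (fun _ ↦ Over.isoMk (Iso.refl _) rfl) fun _ ↦ by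
    ext
    exact (Category.comp_id _).trans (Category.id_comp _).symm

variable {G} in
lemma isIso_of_isIso_right_of_isIso_toOver_map {X Y : ArtinGluing G} (f : X ⟶ Y)
    [IsIso f.right] [IsIso ((toOver G).map f)] : IsIso f := by
  have : IsIso f.left := inferInstanceAs (IsIso ((Over.forget _).map ((toOver G).map f)))
  exact (Comma.isoMk (asIso f.left) (asIso f.right) f.w).isIso_hom

section LeftAdjoint

variable {G} {L : Over (G.obj (⊤_ A)) ⥤ A} (adj : L ⊣ G.praComparison)

/-- The object `(Y, L Y, η)` of the gluing, where `L` is left adjoint to `G.praComparison` and `η`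
is the unit at `Y`. This is the value at `Y` of the left adjoint of `toOver G`. -/
noncomputable def ofUnit (Y : Over (G.obj (⊤_ A))) : ArtinGluing G where
  left := Y.left
  right := L.obj Y
  hom := (adj.unit.app Y).left

noncomputable def ofUnitHomEquiv (Y : Over (G.obj (⊤_ A))) (X : ArtinGluing G) :
    (ofUnit adj Y ⟶ X) ≃ (Y ⟶ (toOver G).obj X) where
  toFun g := Over.homMk g.left <|
    (comp_map_terminal_from g.w).trans (Over.w (adj.unit.app Y))
  invFun h :=
    let k : Y ⟶ G.praComparison.obj X.right :=
      Over.homMk (h.left ≫ X.hom) ((Category.assoc _ _ _).trans (Over.w h))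
    { left := h.left
      right := (adj.homEquiv Y X.right).symm k
      w := by
        have hk := (adj.homEquiv Y X.right).apply_symm_apply k
        rw [adj.homEquiv_unit] at hk
        exact congrArg Over.Hom.left hk.symm }
  left_inv g := by
    ext
    · rfl
    · refine (Equiv.symm_apply_eq _).2 (Eq.trans ?_ (adj.homEquiv_unit _ _ _).symm)
      exact Over.OverMorphism.ext g.w
  right_inv _ := rfl

end LeftAdjoint

theorem isRightAdjoint_toOver_iff :
    (toOver G).IsRightAdjoint ↔ G.IsParametricRightAdjoint where
  mp _ :=
    have := (sndAdjunctionOfBase G).isRightAdjoint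
    Functor.isRightAdjoint_of_iso (ofBaseCompToOverIso G)
  mpr := fun ⟨_, ⟨adj⟩⟩ ↦
    (Adjunction.adjunctionOfEquivLeft (ofUnitHomEquiv adj) fun _ _ _ _ _ ↦ rfl).isRightAdjoint

variable {G} in
lemma mem_essImage_ofOver_of_isTerminal {X : ArtinGluing G} (h : IsTerminal X.right) :
    (ofOver G).essImage X :=
  ⟨Over.mk (X.hom ≫ G.map (terminal.from X.right)),
    ⟨Comma.isoMk (Iso.refl _) (terminalIsTerminal.uniqueUpToIso h) <| by
      have : terminal.from X.right ≫ h.from (⊤_ A) = 𝟙 X.right := h.hom_ext _ _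
      change 𝟙 _ ≫ X.hom = (X.hom ≫ G.map (terminal.from X.right)) ≫ G.map (h.from _)
      rw [Category.id_comp, Category.assoc, ← G.map_comp, this, G.map_id, Category.comp_id]⟩⟩

theorem essImage_ofOver [HasInitial B] [HasStrictInitialObjects B] :
    (ofOver G).essImage = closedComplement (ofInitial G (⊤_ A)) := by
  refine le_antisymm (essImage_le_closedComplement (toOverAdjunction G) fun Z f ↦ ?_)
    fun X hX ↦ mem_essImage_ofOver_of_isTerminal ?_
  · have : IsIso f.left := initialIsInitial.isIso_to f.left
    have hZ : IsInitial Z.left := initialIsInitial.ofIso (asIso f.left).symm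
    exact ⟨.ofUniqueHom (fun _ ↦ Over.homMk (hZ.to _) (hZ.hom_ext _ _))
      fun _ _ ↦ Over.OverMorphism.ext (hZ.hom_ext _ _)⟩
  · have (a : A) : Nonempty (Unique (a ⟶ X.right)) :=
      have ⟨_⟩ := hX ((ofInitialHomEquiv a (ofInitial G (⊤_ A))).symm (terminal.from a))
      ⟨(ofInitialHomEquiv a X).symm.unique⟩
    have (a : A) : Unique (a ⟶ X.right) := (this a).some
    exact IsTerminal.ofUnique X.right

end Terminal

end ArtinGluing

end Gluing

open ArtinGluing in
theorem comma_presheaf_iff_parametricRightAdjoint_general {A : Type u₁} [Category.{w} A]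
    [HasTerminal A] {B : Type u₂} [Category.{w} B] (hA : IsPresheafCategory.{w} A)
    (hB : IsPresheafCategory.{w} B) (G : A ⥤ B) :
    IsPresheafCategory.{w} (Comma (𝟭 B) G) ↔ G.IsParametricRightAdjoint := by
  have := hA.hasColimitsOfSize
  have := hB.hasColimitsOfSize
  have := hasFiniteColimits_of_hasColimitsOfSize B
  have := hB.hasStrictInitialObjects
  rw [← isRightAdjoint_toOver_iff]
  refine ⟨fun hK ↦ hK.isRightAdjoint_of_essImage_eq_closedComplement (toOverAdjunction G)
    (fullyFaithfulOfOver G) (essImage_ofOver G), fun _ ↦ ?_⟩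
  have := (sndAdjunctionOfBase G).leftAdjoint_preservesColimits
  have := (toOverAdjunction G).leftAdjoint_preservesColimits
  exact IsPresheafCategory.of_conservative_pair hA (hB.overCategory _) (Comma.snd _ _) (toOver G)
    fun _ _ f (_ : IsIso f.right) _ ↦ isIso_of_isIso_right_of_isIso_toOver_map f

/-- **Carboni–Johnstone**: for a functor `G` between presheaf categories, the Artin gluing
`Comma (𝟭 (D ⥤ Type)) G` is a presheaf category if and only if `G` is a parametric right
adjoint. -/
theorem comma_presheaf_iff_parametricRightAdjoint {C D : Type} [SmallCategory C]
    [SmallCategory D] (G : (C ⥤ Type) ⥤ (D ⥤ Type)) :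
    (∃ (E : Type) (_ : SmallCategory E),
        Nonempty (Comma (𝟭 (D ⥤ Type)) G ≌ E ⥤ Type)) ↔
      G.IsParametricRightAdjoint :=
  comma_presheaf_iff_parametricRightAdjoint_general (.functorCategory C) (.functorCategory D) G
end
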